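/- arXiv:1807.04618 — 2 statements merged into one kernel-verified Lean document; each statement's English description precedes it below -/
import Mathlib

section
/- If B ∈ 𝔽₃, then a listening schedule is greedy if and only if it is recursive. Consequently, for B ∈ 𝔽₃ every greedy schedule is complete, WDT-optimal, MDT-optimal, and NDoT-optimal. -/
open scoped Classical

/-- A listening schedule over channel set `C`: a set of (channel, time-slot) pairs
such that all scanned channels belong to `C` and at most one channel is scanned
per time slot. -/
def IsSchedule (C : Finset ℕ) (L : Set (ℕ × ℕ)) : Prop :=
  (∀ p ∈ L, p.1 ∈ C) ∧ ∀ c c' t : ℕ, (c, t) ∈ L → (c', t) ∈ L → c = c'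

/-- Configuration `(c, b, δ)` is discovered at time slot `t` by the schedule `L`. -/
def DiscoveredAt (L : Set (ℕ × ℕ)) (c b δ t : ℕ) : Prop :=
  (c, t) ∈ L ∧ t % b = δ

/-- The discovery time `T_κ(L)` of configuration `κ = (c, b, δ)`: the least time slot
at which it is discovered (junk value `0` if it is never discovered). -/
noncomputable def discTime (L : Set (ℕ × ℕ)) (c b δ : ℕ) : ℕ :=
  sInf {t | DiscoveredAt L c b δ t}

/-- A schedule is complete if every configuration in `K_BC` is discovered at some slot. -/
def Complete (C B : Finset ℕ) (L : Set (ℕ × ℕ)) : Prop :=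
  ∀ c ∈ C, ∀ b ∈ B, ∀ δ < b, ∃ t, DiscoveredAt L c b δ t

/-- The set of all configurations `K_BC`, as a finite set of triples `(c, b, δ)`. -/
def KBC (C B : Finset ℕ) : Finset (ℕ × ℕ × ℕ) :=
  (C ×ˢ B ×ˢ Finset.range (B.sup id)).filter fun κ => κ.2.2 < κ.2.1

/-- The weight `P_κ = 1/(b·|B|·|C|)` of a configuration with beacon period `b`. -/
noncomputable def weight (C B : Finset ℕ) (b : ℕ) : ℝ :=
  (1 : ℝ) / ((b : ℝ) * (B.card : ℝ) * (C.card : ℝ))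

/-- Total weight of configurations discovered by `L` at some slot `≤ t` (the NDoT curve). -/
noncomputable def discSum (C B : Finset ℕ) (L : Set (ℕ × ℕ)) (t : ℕ) : ℝ :=
  ∑ κ ∈ (KBC C B).filter (fun κ => ∃ t' ≤ t, DiscoveredAt L κ.1 κ.2.1 κ.2.2 t'),
    weight C B κ.2.1

/-- The mean discovery time `MDT(L) = Σ_{κ ∈ K_BC} P_κ · T_κ(L)`. -/
noncomputable def MDT (C B : Finset ℕ) (L : Set (ℕ × ℕ)) : ℝ :=
  ∑ κ ∈ KBC C B, weight C B κ.2.1 * (discTime L κ.1 κ.2.1 κ.2.2 : ℝ)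

/-- A schedule is recursive if it is complete and, for every `b ∈ B`, every
configuration with beacon period `b` has discovery time at most `b·|C| - 1`. -/
def Recursive (C B : Finset ℕ) (L : Set (ℕ × ℕ)) : Prop :=
  Complete C B L ∧
  ∀ c ∈ C, ∀ b ∈ B, ∀ δ < b, discTime L c b δ ≤ b * C.card - 1

/-- `D(c,t)`: the expected number of new discoveries when scanning channel `c` at slot `t`,
i.e. the sum of weights of configurations `(c, b, t mod b)`, `b ∈ B`, not yet
discovered by `L` before slot `t`. -/
noncomputable def gain (C B : Finset ℕ) (L : Set (ℕ × ℕ)) (c t : ℕ) : ℝ :=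
  ∑ b ∈ B.filter (fun b => ¬ ∃ t' < t, DiscoveredAt L c b (t % b) t'),
    weight C B b

/-- A schedule is greedy if, whenever some channel has positive expected gain at slot `t`,
it scans a channel maximizing the expected gain at slot `t`. -/
def Greedy (C B : Finset ℕ) (L : Set (ℕ × ℕ)) : Prop :=
  IsSchedule C L ∧
  ∀ t : ℕ, (∃ c ∈ C, 0 < gain C B L c t) →
    ∃ c ∈ C, (c, t) ∈ L ∧ ∀ c' ∈ C, gain C B L c' t ≤ gain C B L c t

def Fresh (C : Finset ℕ) (L : Set (ℕ × ℕ)) (b t : ℕ) : Prop :=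
  ∃ c ∈ C, (c, t) ∈ L ∧ ∀ t' < t, t' % b = t % b → (c, t') ∉ L

lemma weight_pos' {C B : Finset ℕ} (hC : C.Nonempty) (hB : B.Nonempty) {b : ℕ} (hb : 0 < b) :
    0 < weight C B b := by
  have h1 := hC.card_pos
  have h2 := hB.card_pos
  unfold weight
  positivity

lemma slot_lt {b n δ k : ℕ} (hδ : δ < b) (hk : k < n) : δ + b * k < b * n := by
  calc δ + b * k < b + b * k := by omega
    _ = b * (k + 1) := by ring
    _ ≤ b * n := Nat.mul_le_mul_left _ hk

lemma fresh_disc {C : Finset ℕ} {L : Set (ℕ × ℕ)} {b : ℕ}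
    (h : ∀ t < b * C.card, Fresh C L b t) :
    ∀ c ∈ C, ∀ δ < b, ∃ t < b * C.card, DiscoveredAt L c b δ t := by
  intro c hc δ hδ
  have h' : ∀ k, ∃ d, k < C.card → d ∈ C ∧ (d, δ + b * k) ∈ L ∧
      ∀ t' < δ + b * k, t' % b = (δ + b * k) % b → (d, t') ∉ L := by
    intro k
    by_cases hk : k < C.card
    · obtain ⟨d, h1, h2, h3⟩ := h (δ + b * k) (slot_lt hδ hk)
      exact ⟨d, fun _ => ⟨h1, h2, h3⟩⟩
    · exact ⟨0, fun h => absurd h hk⟩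
  choose f hf using h'
  have key : ∀ i j, i < C.card → j < C.card → i < j → f i ≠ f j := by
    intro i j hi hj hij he
    refine (hf j hj).2.2 (δ + b * i) ?_ (by simp) (he ▸ (hf i hi).2.1)
    have : b * i < b * j := Nat.mul_lt_mul_of_pos_left hij (by omega)
    omega
  have himg : (Finset.range C.card).image f = C := by
    apply Finset.eq_of_subset_of_card_le
    · intro d hd
      obtain ⟨k, hk, rfl⟩ := Finset.mem_image.1 hd
      exact (hf k (Finset.mem_range.1 hk)).1
    · rw [Finset.card_image_of_injOn, Finset.card_range]
      intro i hi j hj he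
      have hi' : i < C.card := by simpa using hi
      have hj' : j < C.card := by simpa using hj
      rcases lt_trichotomy i j with h1 | h1 | h1
      · exact absurd he (key i j hi' hj' h1)
      · exact h1
      · exact absurd he.symm (key j i hj' hi' h1)
  rw [← himg] at hc
  obtain ⟨k, hk, rfl⟩ := Finset.mem_image.1 hc
  have hk' := Finset.mem_range.1 hk
  refine ⟨δ + b * k, slot_lt hδ hk', (hf k hk').2.1, ?_⟩
  simp [Nat.mod_eq_of_lt hδ]

lemma fresh_of_recursive {C B : Finset ℕ} {L : Set (ℕ × ℕ)} (hC : C.Nonempty)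
    (hBpos : ∀ b ∈ B, 0 < b) (hL : IsSchedule C L) (h : Recursive C B L) :
    ∀ b ∈ B, ∀ t < b * C.card, Fresh C L b t := by
  intro b hb t ht
  have hb0 := hBpos b hb
  have hδ : t % b < b := Nat.mod_lt _ hb0
  have hd : ∀ c ∈ C, DiscoveredAt L c b (t % b) (discTime L c b (t % b)) := fun c hc =>
    Nat.sInf_mem (s := {t' | DiscoveredAt L c b (t % b) t'}) (h.1 c hc b hb _ hδ)
  have hle : ∀ c ∈ C, discTime L c b (t % b) < b * C.card := by
    intro c hc
    have h1 := h.2 c hc b hb _ hδ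
    have := Nat.mul_pos hb0 hC.card_pos
    omega
  have himg : C.image (fun c => discTime L c b (t % b) / b) = Finset.range C.card := by
    apply Finset.eq_of_subset_of_card_le
    · intro k hk
      obtain ⟨c, hc, rfl⟩ := Finset.mem_image.1 hk
      exact Finset.mem_range.2 (Nat.div_lt_of_lt_mul (hle c hc))
    · rw [Finset.card_image_of_injOn, Finset.card_range]
      intro c hc c' hc' he
      have h1 := hd c hc
      have h2 := hd c' hc'
      have e : discTime L c b (t % b) = discTime L c' b (t % b) := by
        rw [← Nat.mod_add_div (discTime L c b (t % b)) b,
          ← Nat.mod_add_div (discTime L c' b (t % b)) b, h1.2, h2.2]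
        simp only at he
        rw [he]
      exact hL.2 _ _ _ h1.1 (e ▸ h2.1)
  have hm : t / b ∈ C.image (fun c => discTime L c b (t % b) / b) := by
    rw [himg]
    exact Finset.mem_range.2 (Nat.div_lt_of_lt_mul ht)
  obtain ⟨c, hc, he⟩ := Finset.mem_image.1 hm
  have h1 := hd c hc
  have e : discTime L c b (t % b) = t := by
    rw [← Nat.mod_add_div (discTime L c b (t % b)) b, h1.2, he, Nat.mod_add_div]
  refine ⟨c, hc, e ▸ h1.1, ?_⟩
  intro t' ht' hm' hin
  have : discTime L c b (t % b) ≤ t' := Nat.sInf_le (show DiscoveredAt L c b (t % b) t' from ⟨hin, hm'⟩)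
  omega

lemma recursive_of_fresh {C B : Finset ℕ} {L : Set (ℕ × ℕ)}
    (h : ∀ b ∈ B, ∀ t < b * C.card, Fresh C L b t) : Recursive C B L := by
  refine ⟨?_, ?_⟩
  · intro c hc b hb δ hδ
    obtain ⟨t, _, ht⟩ := fresh_disc (h b hb) c hc δ hδ
    exact ⟨t, ht⟩
  · intro c hc b hb δ hδ
    obtain ⟨t, h1, ht⟩ := fresh_disc (h b hb) c hc δ hδ
    have : discTime L c b δ ≤ t := Nat.sInf_le ht
    omega

lemma gain_le {C B : Finset ℕ} {L : Set (ℕ × ℕ)} (hC : C.Nonempty) (hB : B.Nonempty)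
    (hBpos : ∀ b ∈ B, 0 < b) {t : ℕ}
    (h : ∀ b ∈ B, ∀ t' < b * C.card, t' < t → Fresh C L b t') :
    ∀ c ∈ C, B.filter (fun b => ¬ ∃ t' < t, DiscoveredAt L c b (t % b) t') ⊆
      B.filter (fun b => t < b * C.card) := by
  intro c hc b hb
  rw [Finset.mem_filter] at hb ⊢
  refine ⟨hb.1, ?_⟩
  by_contra hlt
  push Not at hlt
  obtain ⟨t', h1, h2⟩ := fresh_disc (fun s hs => h b hb.1 s hs (by omega)) c hc (t % b)
    (Nat.mod_lt _ (hBpos b hb.1))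
  exact hb.2 ⟨t', by omega, h2⟩

lemma greedy_of_fresh {C B : Finset ℕ} {L : Set (ℕ × ℕ)} (hC : C.Nonempty) (hB : B.Nonempty)
    (hBpos : ∀ b ∈ B, 0 < b) (hL : IsSchedule C L)
    (h : ∀ b ∈ B, ∀ t < b * C.card, Fresh C L b t) : Greedy C B L := by
  refine ⟨hL, ?_⟩
  rintro t ⟨c0, hc0, hg⟩
  have hsub := gain_le hC hB hBpos (t := t) (fun b hb t' h1 _ => h b hb t' h1)
  obtain ⟨b0, hb0⟩ : (B.filter (fun b => ¬ ∃ t' < t, DiscoveredAt L c0 b (t % b) t')).Nonempty := by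
    rw [Finset.nonempty_iff_ne_empty]
    intro he
    unfold gain at hg
    rw [he] at hg
    simp at hg
  have hb0' := Finset.mem_filter.1 (hsub c0 hc0 hb0)
  obtain ⟨c, hc, hcL, _⟩ := h b0 hb0'.1 t hb0'.2
  refine ⟨c, hc, hcL, ?_⟩
  intro c' hc'
  unfold gain
  apply Finset.sum_le_sum_of_subset_of_nonneg
  · refine (hsub c' hc').trans ?_
    intro b hb
    rw [Finset.mem_filter] at hb ⊢
    refine ⟨hb.1, ?_⟩
    rintro ⟨t', h1, h2⟩
    obtain ⟨d, _, hd, hd'⟩ := h b hb.1 t hb.2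
    have := hL.2 _ _ _ hd hcL
    subst this
    exact hd' t' h1 h2.2 h2.1
  · intro b hb _
    exact (weight_pos' hC hB (hBpos b (Finset.mem_filter.1 hb).1)).le

lemma fresh_of_greedy {C B : Finset ℕ} {L : Set (ℕ × ℕ)} (hC : C.Nonempty) (hB : B.Nonempty)
    (hBpos : ∀ b ∈ B, 0 < b) (hF3 : ∀ b ∈ B, ∀ b' ∈ B, b ∣ b' ∨ b' ∣ b)
    (hg : Greedy C B L) : ∀ t, ∀ b ∈ B, t < b * C.card → Fresh C L b t := by
  intro t
  induction t using Nat.strong_induction_on with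
  | _ t ih =>
  intro b hb ht
  have hL := hg.1
  have hsub := gain_le hC hB hBpos (t := t) (fun b hb t' h1 h2 => ih t' h2 b hb h1)
  set S := B.filter (fun b => t < b * C.card) with hS
  have hSne : S.Nonempty := ⟨b, Finset.mem_filter.2 ⟨hb, ht⟩⟩
  obtain ⟨b0, hb0, hmin⟩ := Finset.exists_min_image S id hSne
  have hb0' := Finset.mem_filter.1 hb0
  have hb0pos := hBpos b0 hb0'.1
  have hdvd : ∀ b ∈ S, b0 ∣ b := by
    intro b hb
    have hb' := Finset.mem_filter.1 hb
    rcases hF3 b0 hb0'.1 b hb'.1 with h | h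
    · exact h
    · have h1 := Nat.le_of_dvd hb0pos h
      have h2 : b0 ≤ b := hmin b hb
      rw [le_antisymm h2 h1]
  -- a channel not scanned yet at this residue
  obtain ⟨c, hc, hcn⟩ : ∃ c ∈ C, ∀ t' < t, t' % b0 = t % b0 → (c, t') ∉ L := by
    by_contra hcon
    push Not at hcon
    have hcon' : ∀ c, ∃ t', c ∈ C → t' < t ∧ t' % b0 = t % b0 ∧ (c, t') ∈ L := by
      intro c
      by_cases hc : c ∈ C
      · obtain ⟨t', h⟩ := hcon c hc
        exact ⟨t', fun _ => h⟩
      · exact ⟨0, fun h => absurd h hc⟩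
    choose f hf using hcon'
    have hcard : C.card ≤ (Finset.range (t / b0)).card := by
      apply Finset.card_le_card_of_injOn (fun c => f c / b0)
      · intro c hc
        have h1 := hf c hc
        simp only [Finset.coe_range, Set.mem_Iio]
        by_contra hle
        push Not at hle
        have e1 := Nat.mod_add_div (f c) b0
        have e2 := Nat.mod_add_div t b0
        have := Nat.mul_le_mul_left b0 hle
        omega
      · intro c hc c' hc' he
        have h1 := hf c hc
        have h2 := hf c' hc'
        simp only at he
        have e : f c = f c' := by
          rw [← Nat.mod_add_div (f c) b0, ← Nat.mod_add_div (f c') b0, h1.2.1, h2.2.1, he]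
        exact hL.2 _ _ _ h1.2.2 (e ▸ h2.2.2)
    rw [Finset.card_range] at hcard
    have : t / b0 < C.card := Nat.div_lt_of_lt_mul hb0'.2
    omega
  have hcS : B.filter (fun b => ¬ ∃ t' < t, DiscoveredAt L c b (t % b) t') = S := by
    apply Finset.Subset.antisymm (hsub c hc)
    intro b hb
    refine Finset.mem_filter.2 ⟨(Finset.mem_filter.1 hb).1, ?_⟩
    rintro ⟨t', h1, h2, h3⟩
    refine hcn t' h1 ?_ h2
    exact Nat.ModEq.of_dvd (hdvd b hb) h3
  have hwpos : ∀ b ∈ S, 0 < weight C B b := fun b hb =>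
    weight_pos' hC hB (hBpos b (Finset.mem_filter.1 hb).1)
  have hcpos : 0 < gain C B L c t := by
    unfold gain
    rw [hcS]
    exact Finset.sum_pos hwpos hSne
  obtain ⟨d, hd, hdL, hdmax⟩ := hg.2 t ⟨c, hc, hcpos⟩
  have hbd : b ∈ B.filter (fun b => ¬ ∃ t' < t, DiscoveredAt L d b (t % b) t') := by
    by_contra hnot
    have hbS : b ∈ S := Finset.mem_filter.2 ⟨hb, ht⟩
    have h1 : gain C B L d t < gain C B L c t := by
      unfold gain
      rw [hcS]
      exact Finset.sum_lt_sum_of_subset (hsub d hd) hbS hnot (hwpos b hbS)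
        (fun j hj _ => (hwpos j hj).le)
    exact absurd (hdmax c hc) (not_le.2 h1)
  refine ⟨d, hd, hdL, ?_⟩
  intro t' h1 h2 h3
  exact (Finset.mem_filter.1 hbd).2 ⟨t', h1, h3, h2⟩

noncomputable def discSet (C B : Finset ℕ) (L : Set (ℕ × ℕ)) (t b : ℕ) : Finset (ℕ × ℕ × ℕ) :=
  ((KBC C B).filter (fun κ => ∃ t' ≤ t, DiscoveredAt L κ.1 κ.2.1 κ.2.2 t')).filter
    (fun κ => κ.2.1 = b)

lemma mem_KBC {C B : Finset ℕ} {κ : ℕ × ℕ × ℕ} :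
    κ ∈ KBC C B ↔ κ.1 ∈ C ∧ κ.2.1 ∈ B ∧ κ.2.2 < κ.2.1 := by
  unfold KBC
  simp only [Finset.mem_filter, Finset.mem_product, Finset.mem_range]
  constructor
  · rintro ⟨⟨h1, h2, _⟩, h3⟩
    exact ⟨h1, h2, h3⟩
  · rintro ⟨h1, h2, h3⟩
    exact ⟨⟨h1, h2, lt_of_lt_of_le h3 (Finset.le_sup (f := id) h2)⟩, h3⟩

lemma discSum_eq (C B : Finset ℕ) (L : Set (ℕ × ℕ)) (t : ℕ) :
    discSum C B L t = ∑ b ∈ B, ((discSet C B L t b).card : ℝ) * weight C B b := by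
  unfold discSum
  rw [← Finset.sum_fiberwise_of_maps_to (t := B) (g := fun κ : ℕ × ℕ × ℕ => κ.2.1)]
  · apply Finset.sum_congr rfl
    intro b _
    rw [Finset.sum_congr rfl (g := fun _ => weight C B b)]
    · rw [Finset.sum_const, nsmul_eq_mul]
      rfl
    · intro κ hκ
      rw [(Finset.mem_filter.1 hκ).2]
  · intro κ hκ
    exact (mem_KBC.1 (Finset.mem_filter.1 hκ).1).2.1

lemma card_discSet_le {C B : Finset ℕ} {L : Set (ℕ × ℕ)} (hL : IsSchedule C L) (t b : ℕ) :
    (discSet C B L t b).card ≤ min (t + 1) (b * C.card) := by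
  apply le_min
  · have hex : ∀ s, ∃ c, ∀ c', (c', s) ∈ L → c' = c := by
      intro s
      by_cases h : ∃ c, (c, s) ∈ L
      · obtain ⟨c, hc⟩ := h
        exact ⟨c, fun c' hc' => hL.2 _ _ _ hc' hc⟩
      · exact ⟨0, fun c' hc' => absurd ⟨c', hc'⟩ h⟩
    choose f hf using hex
    have : discSet C B L t b ⊆ (Finset.range (t + 1)).image (fun s => (f s, b, s % b)) := by
      intro κ hκ
      obtain ⟨h1, h2⟩ := Finset.mem_filter.1 hκ
      obtain ⟨h3, s, hs, h4, h5⟩ := Finset.mem_filter.1 h1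
      refine Finset.mem_image.2 ⟨s, Finset.mem_range.2 (by omega), ?_⟩
      rw [← hf s _ h4, ← h2, h5]
    calc _ ≤ _ := Finset.card_le_card this
      _ ≤ _ := Finset.card_image_le
      _ = _ := Finset.card_range _
  · have : discSet C B L t b ⊆ C ×ˢ {b} ×ˢ Finset.range b := by
      intro κ hκ
      obtain ⟨h1, h2⟩ := Finset.mem_filter.1 hκ
      obtain ⟨h3, h4, h5⟩ := mem_KBC.1 (Finset.mem_filter.1 h1).1
      simp only [Finset.mem_product, Finset.mem_range, Finset.mem_singleton]
      exact ⟨h3, h2, h2 ▸ h5⟩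
    refine (Finset.card_le_card this).trans (le_of_eq ?_)
    simp [Finset.card_product, mul_comm]

lemma le_card_discSet {C B : Finset ℕ} {L : Set (ℕ × ℕ)}
    {b : ℕ} (hb : b ∈ B) (hb0 : 0 < b) (h : ∀ t < b * C.card, Fresh C L b t) (t : ℕ) :
    min (t + 1) (b * C.card) ≤ (discSet C B L t b).card := by
  have h' : ∀ s, ∃ c, s < b * C.card → c ∈ C ∧ (c, s) ∈ L ∧
      ∀ t' < s, t' % b = s % b → (c, t') ∉ L := by
    intro s
    by_cases hs : s < b * C.card
    · obtain ⟨d, hd⟩ := h s hs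
      exact ⟨d, fun _ => hd⟩
    · exact ⟨0, fun h => absurd h hs⟩
  choose f hf using h'
  rw [← Finset.card_range (min (t + 1) (b * C.card))]
  apply Finset.card_le_card_of_injOn (fun s => (f s, b, s % b))
  · intro s hs
    have hs' : s < min (t + 1) (b * C.card) := by simpa using hs
    obtain ⟨h1, h2⟩ := lt_min_iff.1 hs'
    have h3 := hf s h2
    refine Finset.mem_coe.2 (Finset.mem_filter.2 ⟨Finset.mem_filter.2 ⟨mem_KBC.2 ?_, ?_⟩, rfl⟩)
    · exact ⟨h3.1, hb, Nat.mod_lt _ hb0⟩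
    · exact ⟨s, by omega, h3.2.1, rfl⟩
  · intro i hi j hj he
    have hi' : i < min (t + 1) (b * C.card) := by simpa using hi
    have hj' : j < min (t + 1) (b * C.card) := by simpa using hj
    simp only [Prod.mk.injEq, true_and] at he
    have h3 := hf i (lt_min_iff.1 hi').2
    have h4 := hf j (lt_min_iff.1 hj').2
    rcases lt_trichotomy i j with h1 | h1 | h1
    · exact absurd (he.1 ▸ h3.2.1) (h4.2.2 i h1 he.2)
    · exact h1
    · exact absurd (he.1.symm ▸ h4.2.1) (h3.2.2 j h1 he.2.symm)

lemma discSum_le {C B : Finset ℕ} {L L' : Set (ℕ × ℕ)} (hC : C.Nonempty) (hB : B.Nonempty)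
    (hBpos : ∀ b ∈ B, 0 < b) (h : ∀ b ∈ B, ∀ t < b * C.card, Fresh C L b t)
    (hL' : IsSchedule C L') (t : ℕ) : discSum C B L' t ≤ discSum C B L t := by
  rw [discSum_eq, discSum_eq]
  apply Finset.sum_le_sum
  intro b hb
  have h1 := (card_discSet_le (B := B) hL' t b).trans (le_card_discSet hb (hBpos b hb) (h b hb) t)
  have h2 := (weight_pos' hC hB (hBpos b hb)).le
  have h3 : ((discSet C B L' t b).card : ℝ) ≤ (discSet C B L t b).card := by exact_mod_cast h1
  exact mul_le_mul_of_nonneg_right h3 h2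

lemma disc_iff {L : Set (ℕ × ℕ)} {c b δ : ℕ} (h : ∃ t, DiscoveredAt L c b δ t) (t : ℕ) :
    (∃ t' ≤ t, DiscoveredAt L c b δ t') ↔ discTime L c b δ ≤ t := by
  constructor
  · rintro ⟨t', h1, h2⟩
    exact (Nat.sInf_le h2 : discTime L c b δ ≤ t').trans h1
  · intro hle
    exact ⟨_, hle, Nat.sInf_mem (s := {t' | DiscoveredAt L c b δ t'}) h⟩

lemma time_sum (N T : ℕ) (h : T ≤ N) :
    (T : ℝ) = N - ∑ t ∈ Finset.range N, if T ≤ t then (1 : ℝ) else 0 := by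
  rw [Finset.sum_boole]
  have : (Finset.range N).filter (fun t => T ≤ t) = Finset.Ico T N := by
    ext x
    simp [and_comm]
  rw [this, Nat.card_Ico, Nat.cast_sub h]
  ring

lemma MDT_eq {C B : Finset ℕ} {L : Set (ℕ × ℕ)} (h : Complete C B L) (N : ℕ)
    (hN : ∀ κ ∈ KBC C B, discTime L κ.1 κ.2.1 κ.2.2 ≤ N) :
    MDT C B L = (∑ κ ∈ KBC C B, weight C B κ.2.1 * N) -
      ∑ t ∈ Finset.range N, discSum C B L t := by
  have e : ∀ t, discSum C B L t = ∑ κ ∈ KBC C B,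
      weight C B κ.2.1 * (if discTime L κ.1 κ.2.1 κ.2.2 ≤ t then (1 : ℝ) else 0) := by
    intro t
    unfold discSum
    rw [Finset.sum_filter]
    apply Finset.sum_congr rfl
    intro κ hκ
    obtain ⟨h1, h2, h3⟩ := mem_KBC.1 hκ
    have := disc_iff (h _ h1 _ h2 _ h3) t
    simp only [this, mul_ite, mul_one, mul_zero]
  simp only [e]
  rw [Finset.sum_comm, ← Finset.sum_sub_distrib]
  unfold MDT
  apply Finset.sum_congr rfl
  intro κ hκ
  rw [← Finset.mul_sum, ← mul_sub, ← time_sum N _ (hN κ hκ)]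

/-- for `B ∈ 𝔽₃`, a schedule is greedy iff it is recursive; consequently
every greedy schedule is complete, WDT-optimal, MDT-optimal and NDoT-optimal. -/
theorem stmt11 (C B : Finset ℕ) (hC : C.Nonempty) (hB : B.Nonempty)
    (hBpos : ∀ b ∈ B, 0 < b)
    (hF3 : ∀ b ∈ B, ∀ b' ∈ B, b ∣ b' ∨ b' ∣ b)
    (L : Set (ℕ × ℕ)) (hL : IsSchedule C L) :
    (Greedy C B L ↔ Recursive C B L) ∧
    (Greedy C B L →
      Complete C B L ∧
      (∀ c ∈ C, ∀ b ∈ B, ∀ δ < b,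
        discTime L c b δ ≤ B.max' hB * C.card - 1) ∧
      (∀ L' : Set (ℕ × ℕ), IsSchedule C L' → Complete C B L' →
        MDT C B L ≤ MDT C B L') ∧
      (∀ L' : Set (ℕ × ℕ), IsSchedule C L' →
        ∀ t : ℕ, discSum C B L' t ≤ discSum C B L t)) := by
  have hGF : Greedy C B L → ∀ b ∈ B, ∀ t < b * C.card, Fresh C L b t :=
    fun hg b hb t ht => fresh_of_greedy hC hB hBpos hF3 hg t b hb ht
  refine ⟨⟨fun hg => recursive_of_fresh (hGF hg), fun hr =>
    greedy_of_fresh hC hB hBpos hL (fresh_of_recursive hC hBpos hL hr)⟩, ?_⟩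
  intro hg
  have hF := hGF hg
  have hR := recursive_of_fresh hF
  refine ⟨hR.1, ?_, ?_, ?_⟩
  · intro c hc b hb δ hδ
    have h1 := hR.2 c hc b hb δ hδ
    have h2 := Nat.mul_le_mul_right C.card (B.le_max' b hb)
    omega
  · intro L' hL' hcomp
    set N := (KBC C B).sup (fun κ => discTime L κ.1 κ.2.1 κ.2.2) +
      (KBC C B).sup (fun κ => discTime L' κ.1 κ.2.1 κ.2.2) with hN
    have h1 : ∀ κ ∈ KBC C B, discTime L κ.1 κ.2.1 κ.2.2 ≤ N := fun κ hκ =>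
      (Finset.le_sup (f := fun κ : ℕ × ℕ × ℕ => discTime L κ.1 κ.2.1 κ.2.2) hκ).trans
        (Nat.le_add_right _ _)
    have h2 : ∀ κ ∈ KBC C B, discTime L' κ.1 κ.2.1 κ.2.2 ≤ N := fun κ hκ =>
      (Finset.le_sup (f := fun κ : ℕ × ℕ × ℕ => discTime L' κ.1 κ.2.1 κ.2.2) hκ).trans
        (Nat.le_add_left _ _)
    rw [MDT_eq hR.1 N h1, MDT_eq hcomp N h2]
    apply sub_le_sub_left
    exact Finset.sum_le_sum fun t _ => discSum_le hC hB hBpos hF hL' t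
  · intro L' hL' t
    exact discSum_le hC hB hBpos hF hL' t
end

section
/- Let B ∈ 𝔽₂ and let f : ℕ^{K_BC} → ℝ be strictly increasing in each coordinate. If a complete schedule L minimizes f((T_κ(L))_{κ∈K_BC}) among all complete schedules, then L is WDT-optimal, i.e., every configuration κ ∈ K_BC has discovery time T_κ(L) ≤ max(B)·|C| − 1. -/
open scoped Classical

theorem aux_mono {ι : Type*} [Fintype ι] (f : (ι → ℕ) → ℝ)
    (hf : ∀ (v : ι → ℕ) (κ : ι) (n m : ℕ), n < m →
      f (Function.update v κ n) < f (Function.update v κ m))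
    (v w : ι → ℕ) (h : ∀ i, v i ≤ w i) (k : ι) (hk : v k < w k) : f v < f w := by
  have hf' : ∀ (v : ι → ℕ) (κ : ι) (n m : ℕ), n ≤ m →
      f (Function.update v κ n) ≤ f (Function.update v κ m) := by
    intro v κ n m hnm
    rcases hnm.lt_or_eq with h | rfl
    · exact (hf v κ n m h).le
    · exact le_rfl
  have key : ∀ (s : Finset ι) (u w : ι → ℕ), (∀ i, u i ≤ w i) → (∀ i, i ∉ s → u i = w i) →
      f u ≤ f w := by
    intro s
    induction s using Finset.induction_on with
    | empty =>
      intro u w _ h2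
      have : u = w := funext fun i => h2 i (by simp)
      rw [this]
    | insert a s ha ih =>
      intro u w h1 h2
      have e1 : f u ≤ f (Function.update u a (w a)) := by
        have := hf' u a (u a) (w a) (h1 a)
        rwa [Function.update_eq_self] at this
      refine e1.trans (ih _ _ ?_ ?_)
      · intro i
        by_cases hi : i = a
        · subst hi; simp
        · simp [Function.update_of_ne hi, h1 i]
      · intro i his
        by_cases hi : i = a
        · subst hi; simp
        · rw [Function.update_of_ne hi]
          exact h2 i (by simp [hi, his])
  have e1 : f v < f (Function.update v k (w k)) := by
    have := hf v k (v k) (w k) hk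
    rwa [Function.update_eq_self] at this
  refine e1.trans_le (key Finset.univ _ _ ?_ (by simp))
  intro i
  by_cases hi : i = k
  · subst hi; simp
  · simp [Function.update_of_ne hi, h i]

theorem aux_slot (C : Finset ℕ) (L : Set (ℕ × ℕ)) (hL : IsSchedule C L) (M r c : ℕ)
    (hM : 0 < M) (hr : r < M) (hc : c ∈ C)
    (hno : ∀ i < C.card, (c, r + i * M) ∉ L) :
    ∃ i < C.card, ∀ x, (x, r + i * M) ∈ L → ∃ j < i, (x, r + j * M) ∈ L := by
  by_contra! hcon
  choose! g hg1 hg2 using hcon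
  obtain ⟨i, hi, j, hj, hij, he⟩ := Finset.exists_ne_map_eq_of_card_lt_of_maps_to
    (s := Finset.range C.card) (t := C.erase c) (f := g)
    (by rw [Finset.card_range]; exact Finset.card_erase_lt_of_mem hc)
    (by
      intro i hi
      have hi' : i < C.card := by simpa using hi
      have h1 := hg1 i hi'
      simp only [Finset.coe_erase, Set.mem_sdiff, Set.mem_singleton_iff, Finset.mem_coe]
      refine ⟨hL.1 _ h1, ?_⟩
      intro h
      rw [h] at h1
      exact hno i hi' h1)
  rw [Finset.mem_range] at hi hj
  rcases lt_or_gt_of_ne hij with h | h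
  · exact hg2 j hj i h (he ▸ hg1 i hi)
  · exact hg2 i hi j h (he ▸ hg1 j hj)

/-- for `B ∈ 𝔽₂`, if `f : ℕ^{K_BC} → ℝ` is strictly increasing in each
coordinate and a complete schedule `L` minimizes `f((T_κ(L))_κ)` among complete
schedules, then `L` is WDT-optimal: all discovery times are at most `max(B)·|C| − 1`. -/
theorem stmt15 (C B : Finset ℕ) (hC : C.Nonempty) (hB : B.Nonempty)
    (hBpos : ∀ b ∈ B, 0 < b)
    (hF2 : ∀ b ∈ B, b ∣ B.max' hB)
    (f : ({κ : ℕ × ℕ × ℕ // κ ∈ KBC C B} → ℕ) → ℝ)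
    (hf : ∀ (v : {κ : ℕ × ℕ × ℕ // κ ∈ KBC C B} → ℕ)
        (κ : {κ : ℕ × ℕ × ℕ // κ ∈ KBC C B}) (n m : ℕ), n < m →
      f (Function.update v κ n) < f (Function.update v κ m))
    (L : Set (ℕ × ℕ)) (hL : IsSchedule C L) (hcomp : Complete C B L)
    (hmin : ∀ L' : Set (ℕ × ℕ), IsSchedule C L' → Complete C B L' →
      f (fun κ => discTime L κ.1.1 κ.1.2.1 κ.1.2.2) ≤
        f (fun κ => discTime L' κ.1.1 κ.1.2.1 κ.1.2.2)) :
    ∀ c ∈ C, ∀ b ∈ B, ∀ δ < b, discTime L c b δ ≤ B.max' hB * C.card - 1 := by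
  intro c hc b hb δ hδ
  by_contra! hlt
  set M := B.max' hB with hMdef
  have hM : 0 < M := hBpos M (B.max'_mem hB)
  have hcard : 0 < C.card := hC.card_pos
  have hspec : ∀ x ∈ C, ∀ b ∈ B, ∀ δ < b, DiscoveredAt L x b δ (discTime L x b δ) :=
    fun x hx b hb δ hδ => Nat.sInf_mem (hcomp x hx b hb δ hδ)
  set T := discTime L c b δ with hT
  have hTs : DiscoveredAt L c b δ T := hspec c hc b hb δ hδ
  have hmod : ∀ b ∈ B, ∀ i j, (T % M + i * M) % b = (T % M + j * M) % b := by
    intro b hb i j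
    obtain ⟨k, hk⟩ := hF2 b hb
    have h : ∀ i, (T % M + i * M) % b = T % M % b := by
      intro i
      rw [hk, show i * (b * k) = b * (i * k) by ring, Nat.add_mul_mod_self_left]
    rw [h i, h j]
  have hmodT : ∀ i, (T % M + i * M) % b = δ := by
    intro i
    rw [hmod b hb i (T / M), ← hTs.2, mul_comm, Nat.mod_add_div]
  have hbound : ∀ i < C.card, T % M + i * M < T := by
    intro i hi
    have h1 : T % M < M := Nat.mod_lt _ hM
    have h2 : (i + 1) * M ≤ C.card * M := Nat.mul_le_mul_right _ hi
    have h3 : M * C.card = C.card * M := mul_comm _ _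
    have h4 : (i + 1) * M = i * M + M := by ring
    omega
  obtain ⟨i, hi, hslot⟩ := aux_slot C L hL M (T % M) c hM (Nat.mod_lt _ hM) hc (by
    intro i hi hmem
    exact absurd (Nat.sInf_le (show T % M + i * M ∈ {t | DiscoveredAt L c b δ t} from
      ⟨hmem, hmodT i⟩)) (not_le.mpr (hbound i hi)))
  set s := T % M + i * M with hs
  let L' : Set (ℕ × ℕ) := {p | (p ∈ L ∧ p.2 ≠ s) ∨ p = (c, s)}
  have hL' : IsSchedule C L' := by
    refine ⟨?_, ?_⟩
    · rintro p (⟨hp, -⟩ | rfl)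
      · exact hL.1 p hp
      · exact hc
    · rintro x y t (⟨hx, hx'⟩ | hx) (⟨hy, hy'⟩ | hy)
      · exact hL.2 x y t hx hy
      · exact absurd (Prod.ext_iff.1 hy).2 hx'
      · exact absurd (Prod.ext_iff.1 hx).2 hy'
      · exact (Prod.ext_iff.1 hx).1.trans (Prod.ext_iff.1 hy).1.symm
  have hkeep : ∀ x ∈ C, ∀ b ∈ B, ∀ δ < b, DiscoveredAt L' x b δ (discTime L x b δ) := by
    intro x hx b hb δ hδ
    have h := hspec x hx b hb δ hδ
    refine ⟨Or.inl ⟨h.1, ?_⟩, h.2⟩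
    intro heq
    change discTime L x b δ = s at heq
    rw [heq] at h
    obtain ⟨j, hj, hjm⟩ := hslot x h.1
    have h1 : discTime L x b δ ≤ T % M + j * M :=
      Nat.sInf_le ⟨hjm, (hmod b hb j i).trans h.2⟩
    have h2 : j * M < i * M := Nat.mul_lt_mul_of_pos_right hj hM
    omega
  have hcomp' : Complete C B L' := fun x hx b hb δ hδ => ⟨_, hkeep x hx b hb δ hδ⟩
  have hnew : discTime L' c b δ ≤ s := Nat.sInf_le ⟨Or.inr rfl, hmodT i⟩
  have hκ : (c, b, δ) ∈ KBC C B := by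
    simp only [KBC, Finset.mem_filter, Finset.mem_product, Finset.mem_range]
    have : b ≤ B.sup id := Finset.le_sup (f := id) hb
    exact ⟨⟨hc, hb, by omega⟩, hδ⟩
  refine absurd (hmin L' hL' hcomp') (not_le.mpr ?_)
  refine aux_mono f ?_ _ _ ?_ ⟨(c, b, δ), hκ⟩ (hnew.trans_lt (hbound i hi))
  · intro v κ n m h
    convert hf v κ n m h
  · rintro ⟨⟨x, b, δ⟩, hx⟩
    simp only [KBC, Finset.mem_filter, Finset.mem_product, Finset.mem_range] at hx
    exact Nat.sInf_le (hkeep x hx.1.1 b hx.1.2.1 δ hx.2)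
end
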